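/- arXiv:2202.06711 — 6 statements merged into one kernel-verified Lean document; each statement's English description precedes it below -/
import Mathlib

section
/- Let 𝓔 be an abelian category, n ≥ 1, and M an nℤ-cluster tilting subcategory of 𝓔. Then for every object X ∈ M and every n-exact sequence Y : Y⁰ → Y¹ → ⋯ → Yⁿ → Y^{n+1} in M, the induced sequence of abelian groups 0 → Hom(X,Y⁰) → ⋯ → Hom(X,Y^{n+1}) → Extⁿ(X,Y⁰) → ⋯ → Extⁿ(X,Y^{n+1}) → Ext²ⁿ(X,Y⁰) → ⋯ is exact at every spot, where within each row the maps are induced by the differentials of Y and each connecting map Ext^{kn}(X,Y^{n+1}) → Ext^{(k+1)n}(X,Y⁰) is Yoneda composition with the class [Y] ∈ Extⁿ(Y^{n+1},Y⁰). -/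
open CategoryTheory CategoryTheory.Abelian CategoryTheory.Limits

universe w v u

namespace NZPaper

variable {C : Type u} [Category.{v} C] [Abelian C] [HasExt.{w} C]

/-- A full (iso-closed) subcategory, encoded as a set of objects, is `n`-cluster tilting if it
admits monic left approximations and epic right approximations and is characterized by the
vanishing of `Ext^i` for `1 ≤ i ≤ n-1` on either side. -/
def IsNClusterTilting (n : ℕ) (M : Set C) : Prop :=
  (∀ ⦃X Y : C⦄, (X ≅ Y) → X ∈ M → Y ∈ M) ∧
  (∀ E : C, ∃ (X : C) (f : E ⟶ X), X ∈ M ∧ Mono f ∧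
      ∀ X' ∈ M, ∀ g : E ⟶ X', ∃ h : X ⟶ X', f ≫ h = g) ∧
  (∀ E : C, ∃ (X : C) (f : X ⟶ E), X ∈ M ∧ Epi f ∧
      ∀ X' ∈ M, ∀ g : X' ⟶ E, ∃ h : X' ⟶ X, h ≫ f = g) ∧
  (∀ E : C, E ∈ M ↔ ∀ Y ∈ M, ∀ i : ℕ, 1 ≤ i → i < n → ∀ e : Ext E Y i, e = 0) ∧
  (∀ E : C, E ∈ M ↔ ∀ Y ∈ M, ∀ i : ℕ, 1 ≤ i → i < n → ∀ e : Ext Y E i, e = 0)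

/-- An `nℤ`-cluster tilting subcategory: in addition `Ext^k` vanishes on `M` for every
`k ≥ 1` not divisible by `n`. -/
def IsNZClusterTilting (n : ℕ) (M : Set C) : Prop :=
  IsNClusterTilting n M ∧
  ∀ X ∈ M, ∀ Y ∈ M, ∀ k : ℕ, 1 ≤ k → ¬ (n ∣ k) → ∀ e : Ext X Y k, e = 0

/-- An exact sequence `0 → Y 0 → Y 1 → ⋯ → Y m → Y (m+1) → 0` in an abelian category,
recorded together with its canonical splicing into short exact sequences
`0 → K i → Y (i+1) → K (i+1) → 0` (`K i` is the image of `d i` for `1 ≤ i ≤ m`,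
`K 0 = Y 0` and `K m = Y (m+1)`).  Only the indices `0, …, m+1` (resp. `0, …, m`) of
`Y` (resp. of the differentials and of `K`) are relevant; the remaining values are junk
(any such exact sequence can be padded by zero objects). -/
structure ExactExtension (C : Type u) [Category.{v} C] [Abelian C] (m : ℕ) where
  Y : ℕ → C
  d : ∀ i, Y i ⟶ Y (i + 1)
  K : ℕ → C
  ι : ∀ i, K i ⟶ Y (i + 1)
  π : ∀ i, Y i ⟶ K i
  hK0 : K 0 = Y 0
  hKm : K m = Y (m + 1)
  zero : ∀ i, ι i ≫ π (i + 1) = 0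
  shortExact : ∀ i, (ShortComplex.mk (ι i) (π (i + 1)) (zero i)).ShortExact
  d0_eq : eqToHom hK0 ≫ d 0 = ι 0
  dmid_eq : ∀ i, 1 ≤ i → i + 1 ≤ m → d i = π i ≫ ι i
  dlast_eq : d m = π m ≫ eqToHom hKm

/-- The Yoneda class of the chain of the first `j` short exact sequences,
obtained as the Yoneda composite of their `Ext¹`-classes. -/
noncomputable def ExactExtension.chainClass {m : ℕ} (T : ExactExtension C m) :
    ∀ j : ℕ, Ext (T.K j) (T.K 0) j
  | 0 => Ext.mk₀ (𝟙 _)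
  | (j + 1) => ((T.shortExact j).extClass).comp (T.chainClass j) (by omega)

/-- The Yoneda class `[ξ] ∈ Ext^m (Y (m+1)) (Y 0)` of the exact sequence
`0 → Y 0 → ⋯ → Y (m+1) → 0`, i.e. the Yoneda composite of the `Ext¹`-classes of the
short exact sequences obtained by splicing it at its images. -/
noncomputable def ExactExtension.extClass {m : ℕ} (T : ExactExtension C m) :
    Ext (T.Y (m + 1)) (T.Y 0) m :=
  (Ext.mk₀ (eqToHom T.hKm.symm)).comp
    ((T.chainClass m).comp (Ext.mk₀ (eqToHom T.hK0)) (add_zero m)) (zero_add m)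

/-- Transport of an `Ext`-class along equalities of objects. -/
noncomputable def extTransport {X X' Z Z' : C} {a : ℕ} (e : Ext X Z a)
    (hX : X = X') (hZ : Z = Z') : Ext X' Z' a :=
  (Ext.mk₀ (eqToHom hX.symm)).comp (e.comp (Ext.mk₀ (eqToHom hZ)) (add_zero a)) (zero_add a)

/-- Exactness, at every spot, of the long sequence of abelian groups
`0 → Hom(X,Y⁰) → ⋯ → Hom(X,Y^{n+1}) → Extⁿ(X,Y⁰) → ⋯ → Extⁿ(X,Y^{n+1}) → Ext^{2n}(X,Y⁰) → ⋯`
(`Ext⁰ = Hom`), where within each row the maps are induced by the differentials of `T` and each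
connecting map `Ext^{kn}(X,Y^{n+1}) → Ext^{(k+1)n}(X,Y⁰)` is Yoneda composition with the class
`[T] ∈ Extⁿ(Y^{n+1},Y⁰)`. -/
def CovLES (n : ℕ) (X : C) (T : ExactExtension C n) : Prop :=
  (Function.Injective fun e : Ext X (T.Y 0) 0 => e.comp (Ext.mk₀ (T.d 0)) (add_zero 0)) ∧
  (∀ k i : ℕ, i < n → Function.Exact
      (fun e : Ext X (T.Y i) (k * n) => e.comp (Ext.mk₀ (T.d i)) (add_zero _))
      (fun e : Ext X (T.Y (i + 1)) (k * n) => e.comp (Ext.mk₀ (T.d (i + 1))) (add_zero _))) ∧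
  (∀ k : ℕ, Function.Exact
      (fun e : Ext X (T.Y n) (k * n) => e.comp (Ext.mk₀ (T.d n)) (add_zero _))
      (fun e : Ext X (T.Y (n + 1)) (k * n) =>
        e.comp T.extClass (show k * n + n = (k + 1) * n by ring))) ∧
  (∀ k : ℕ, Function.Exact
      (fun e : Ext X (T.Y (n + 1)) (k * n) =>
        e.comp T.extClass (show k * n + n = (k + 1) * n by ring))
      (fun e : Ext X (T.Y 0) ((k + 1) * n) => e.comp (Ext.mk₀ (T.d 0)) (add_zero _)))

/-- Exactness, at every spot, of the long sequence of abelian groups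
`0 → Hom(Y^{n+1},Z) → ⋯ → Hom(Y⁰,Z) → Extⁿ(Y^{n+1},Z) → ⋯ → Extⁿ(Y⁰,Z) → Ext^{2n}(Y^{n+1},Z) → ⋯`
(`Ext⁰ = Hom`), where within each row the maps are induced by the differentials of `T` and each
connecting map `Ext^{kn}(Y⁰,Z) → Ext^{(k+1)n}(Y^{n+1},Z)` is Yoneda precomposition with the class
`[T] ∈ Extⁿ(Y^{n+1},Y⁰)`. -/
def ContraLES (n : ℕ) (Z : C) (T : ExactExtension C n) : Prop :=
  (Function.Injective fun e : Ext (T.Y (n + 1)) Z 0 => (Ext.mk₀ (T.d n)).comp e (zero_add 0)) ∧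
  (∀ k i : ℕ, i < n → Function.Exact
      (fun e : Ext (T.Y (i + 2)) Z (k * n) => (Ext.mk₀ (T.d (i + 1))).comp e (zero_add _))
      (fun e : Ext (T.Y (i + 1)) Z (k * n) => (Ext.mk₀ (T.d i)).comp e (zero_add _))) ∧
  (∀ k : ℕ, Function.Exact
      (fun e : Ext (T.Y 1) Z (k * n) => (Ext.mk₀ (T.d 0)).comp e (zero_add _))
      (fun e : Ext (T.Y 0) Z (k * n) =>
        T.extClass.comp e (show n + k * n = (k + 1) * n by ring))) ∧
  (∀ k : ℕ, Function.Exact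
      (fun e : Ext (T.Y 0) Z (k * n) =>
        T.extClass.comp e (show n + k * n = (k + 1) * n by ring))
      (fun e : Ext (T.Y (n + 1)) Z ((k + 1) * n) => (Ext.mk₀ (T.d n)).comp e (zero_add _)))

end NZPaper

namespace NZPaper

lemma d0_eq' {C : Type u} [Category.{v} C] [Abelian C] {n : ℕ} (T : ExactExtension C n) : T.d 0 = eqToHom T.hK0.symm ≫ T.ι 0 := by
  rw [← T.d0_eq]; simp

section Helpers

variable {C : Type u} [Category.{v} C] [Abelian C] [HasExt.{w} C]

lemma iso_inj {X Y Z : C} {a : ℕ} (f : Y ⟶ Z) [IsIso f] (x : Ext X Y a)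
    (h : x.comp (Ext.mk₀ f) (add_zero a) = 0) : x = 0 := by
  have h2 : (x.comp (Ext.mk₀ f) (add_zero a)).comp (Ext.mk₀ (inv f)) (add_zero a) = 0 := by
    rw [h, Ext.zero_comp]
  rw [Ext.comp_assoc_of_third_deg_zero, Ext.mk₀_comp_mk₀, IsIso.hom_inv_id, Ext.comp_mk₀_id] at h2
  exact h2

lemma comp_mk0 {X Y Z W : C} {a : ℕ} (x : Ext X Y a) (f : Y ⟶ Z) (g : Z ⟶ W) :
    x.comp (Ext.mk₀ (f ≫ g)) (add_zero a) =
      (x.comp (Ext.mk₀ f) (add_zero a)).comp (Ext.mk₀ g) (add_zero a) := by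
  rw [Ext.comp_assoc_of_third_deg_zero, Ext.mk₀_comp_mk₀]

lemma chain_iota {m : ℕ} (T : ExactExtension C m) (j : ℕ) :
    (T.chainClass (j + 1)).comp (Ext.mk₀ (T.ι 0)) (add_zero _) = 0 := by
  induction j with
  | zero =>
    simp only [ExactExtension.chainClass, Ext.comp_mk₀_id]
    exact (T.shortExact 0).extClass_comp
  | succ j ih =>
    rw [ExactExtension.chainClass, Ext.comp_assoc_of_third_deg_zero, ih, Ext.comp_zero]

lemma not_dvd_of {n q r : ℕ} (h1 : 1 ≤ r) (h2 : r < n) : ¬ n ∣ q * n + r := by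
  intro h
  have := (Nat.dvd_add_right (Dvd.intro_left q rfl)).1 h
  exact absurd (Nat.le_of_dvd h1 this) (by omega)

lemma not_dvd_of' {n q a j : ℕ} (h : a + j = (q + 1) * n) (h1 : 1 ≤ j) (h2 : j < n) :
    ¬ n ∣ a := by
  have : a = q * n + (n - j) := by
    rw [add_mul] at h; omega
  rw [this]
  exact not_dvd_of (by omega) (by omega)

section
variable {n : ℕ} {X : C} (T : ExactExtension C n)
  (HZ : ∀ i ≤ n + 1, ∀ a : ℕ, 1 ≤ a → ¬ n ∣ a → ∀ e : Ext X (T.Y i) a, e = 0)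
include HZ

lemma van_up (j : ℕ) : ∀ k r : ℕ, 1 ≤ r → r + j < n →
    ∀ e : Ext X (T.K j) (k * n + r), e = 0 := by
  induction j with
  | zero =>
    intro k r h1 h2 e
    exact iso_inj (eqToHom T.hK0) e (HZ 0 (by omega) _ (by omega) (not_dvd_of h1 (by omega)) _)
  | succ j ih =>
    intro k r h1 h2 e
    obtain ⟨y, rfl⟩ := Ext.covariant_sequence_exact₃ X (T.shortExact j) e
      (n₁ := k * n + (r + 1)) (by omega) (ih k (r + 1) (by omega) (by omega) _)
    dsimp at y ⊢
    rw [HZ (j + 1) (by omega) _ (by omega) (not_dvd_of h1 (by omega)) y, Ext.zero_comp]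

lemma van_down (l : ℕ) : ∀ j k r : ℕ, j + l = n → r < n → l + 1 ≤ r →
    ∀ e : Ext X (T.K j) (k * n + r), e = 0 := by
  induction l with
  | zero =>
    intro j k r hj h1 h2 e
    obtain rfl : j = n := by omega
    exact iso_inj (eqToHom T.hKm) e (HZ _ le_rfl _ (by omega) (not_dvd_of h2 (by omega)) _)
  | succ l ih =>
    intro j k r hj h1 h2 e
    obtain ⟨y, rfl⟩ := Ext.covariant_sequence_exact₁ X (T.shortExact j) e
      (HZ (j + 1) (by omega) _ (by omega) (not_dvd_of (by omega) (by omega)) _)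
      (n₀ := k * n + (r - 1)) (by omega)
    rw [ih (j + 1) k (r - 1) (by omega) (by omega) (by omega) y, Ext.zero_comp]

lemma chain_inj (j : ℕ) : j < n → ∀ (k a b : ℕ) (hb : a + j = b), b = (k + 1) * n →
    ∀ x : Ext X (T.K j) a, x.comp (T.chainClass j) hb = 0 → x = 0 := by
  induction j with
  | zero =>
    intro _ k a b hb h x hx
    obtain rfl : a = b := hb
    rw [ExactExtension.chainClass, Ext.comp_mk₀_id] at hx
    exact hx
  | succ j ih =>
    intro hj k a b hb h x hx
    rw [ExactExtension.chainClass, ← Ext.comp_assoc (a₁₂ := a + 1) x _ _ rfl _ (by omega)] at hx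
    have h0 := ih (by omega) k (a + 1) b (by omega) h _ hx
    obtain ⟨y, rfl⟩ := Ext.covariant_sequence_exact₃ X (T.shortExact j) x rfl h0
    have hnd : ¬ n ∣ a := not_dvd_of' (hb.trans h) (by omega) hj
    have ha : 1 ≤ a := by
      rcases Nat.eq_zero_or_pos a with rfl | h'
      · exact absurd (dvd_zero n) hnd
      · exact h'
    dsimp at y ⊢
    rw [HZ (j + 1) (by omega) a ha hnd y, Ext.zero_comp]

lemma chain_surj (j : ℕ) : j + 1 ≤ n → ∀ (k a b : ℕ) (hb : a + (j + 1) = b), b = (k + 1) * n →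
    ∀ y : Ext X (T.K 0) b, y.comp (Ext.mk₀ (T.ι 0)) (add_zero b) = 0 →
    ∃ x : Ext X (T.K (j + 1)) a, x.comp (T.chainClass (j + 1)) hb = y := by
  induction j with
  | zero =>
    intro _ k a b hb h y hy
    obtain ⟨x, hx⟩ := Ext.covariant_sequence_exact₁ X (T.shortExact 0) y hy hb
    refine ⟨x, ?_⟩
    simp only [ExactExtension.chainClass, Ext.comp_mk₀_id]
    exact hx
  | succ j ih =>
    intro hj k a b hb h y hy
    obtain ⟨x', hx'⟩ := ih (by omega) k (a + 1) b (by omega) h y hy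
    obtain ⟨x, rfl⟩ := Ext.covariant_sequence_exact₁ X (T.shortExact (j + 1)) x'
      (HZ (j + 2) (by omega) _ (by omega)
        (not_dvd_of' (q := k) (j := j + 1) (by omega) (by omega) (by omega)) _) rfl
    refine ⟨x, ?_⟩
    rw [← hx', ExactExtension.chainClass, Ext.comp_assoc x _ _ rfl _ (by omega)]

end

lemma comp_extClass {n : ℕ} (T : ExactExtension C n) {X : C} {a b : ℕ} (h : a + n = b)
    (e : Ext X (T.Y (n + 1)) a) :
    e.comp T.extClass h =
      ((e.comp (Ext.mk₀ (eqToHom T.hKm.symm)) (add_zero a)).comp (T.chainClass n) h).comp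
        (Ext.mk₀ (eqToHom T.hK0)) (add_zero b) := by
  rw [ExactExtension.extClass, Ext.comp_assoc_of_third_deg_zero,
    Ext.comp_assoc_of_second_deg_zero]

end Helpers

/-- Let `𝓔` be an abelian category, `n ≥ 1`, and `M` an `nℤ`-cluster tilting
subcategory of `𝓔`.  Then for every `X ∈ M` and every `n`-exact sequence
`Y : Y⁰ → Y¹ → ⋯ → Yⁿ → Y^{n+1}` in `M` the induced long sequence of abelian groups
`0 → Hom(X,Y⁰) → ⋯ → Hom(X,Y^{n+1}) → Extⁿ(X,Y⁰) → ⋯ → Extⁿ(X,Y^{n+1}) → Ext^{2n}(X,Y⁰) → ⋯`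
is exact at every spot. -/
theorem covariant_les_of_nZ_cluster_tilting
    {C : Type u} [Category.{v} C] [Abelian C] [HasExt.{w} C]
    (n : ℕ) (hn : 1 ≤ n) (M : Set C) (hM : IsNZClusterTilting n M)
    (X : C) (hX : X ∈ M)
    (T : ExactExtension C n) (hT : ∀ i ≤ n + 1, T.Y i ∈ M) :
    CovLES n X T := by
  obtain ⟨-, hZ⟩ := hM
  have HZ : ∀ i ≤ n + 1, ∀ a : ℕ, 1 ≤ a → ¬ n ∣ a → ∀ e : Ext X (T.Y i) a, e = 0 :=
    fun i hi a h1 h2 e => hZ X hX _ (hT i hi) a h1 h2 e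
  obtain ⟨m, rfl⟩ : ∃ m, n = m + 1 := ⟨n - 1, by omega⟩
  refine ⟨?_, ?_, ?_, ?_⟩
  · have : Mono (T.ι 0) := (T.shortExact 0).mono_f
    have : Mono (T.d 0) := by rw [d0_eq']; infer_instance
    exact Ext.postcomp_mk₀_injective_of_mono X (T.d 0)
  · intro k i hi
    -- `d i` factors through `ι i`
    have hd : ∃ p : T.Y i ⟶ T.K i, T.d i = p ≫ T.ι i ∧
        ∀ e : Ext X (T.K i) (k * (m + 1)),
        ∃ e' : Ext X (T.Y i) (k * (m + 1)), e'.comp (Ext.mk₀ p) (add_zero _) = e := by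
      rcases Nat.eq_zero_or_pos i with rfl | hi0
      · refine ⟨_, d0_eq' T, fun e => ⟨e.comp (Ext.mk₀ (eqToHom T.hK0)) (add_zero _), ?_⟩⟩
        rw [← comp_mk0]; simp
      · refine ⟨T.π i, T.dmid_eq i hi0 (by omega), fun e => ?_⟩
        obtain ⟨j, rfl⟩ : ∃ j, i = j + 1 := ⟨i - 1, by omega⟩
        exact Ext.covariant_sequence_exact₃ X (T.shortExact j) e rfl
          (van_up T HZ j k 1 le_rfl (by omega) _)
    have hd' : ∃ q : T.K (i + 1) ⟶ T.Y (i + 2), T.d (i + 1) = T.π (i + 1) ≫ q ∧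
        ∀ e : Ext X (T.K (i + 1)) (k * (m + 1)),
          e.comp (Ext.mk₀ q) (add_zero _) = 0 → e = 0 := by
      by_cases him : i = m
      · subst him
        exact ⟨_, T.dlast_eq, fun e he => iso_inj _ e he⟩
      · refine ⟨_, T.dmid_eq (i + 1) (by omega) (by omega), fun e he => ?_⟩
        rcases Nat.eq_zero_or_pos k with rfl | hk
        · have : Mono (T.ι (i + 1)) := (T.shortExact (i + 1)).mono_f
          generalize hz : 0 * (m + 1) = z at e he
          obtain rfl : z = 0 := by omega
          apply Ext.postcomp_mk₀_injective_of_mono X (T.ι (i + 1))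
          rw [map_zero]
          exact he
        · obtain ⟨k, rfl⟩ : ∃ k', k = k' + 1 := ⟨k - 1, by omega⟩
          obtain ⟨y, rfl⟩ := Ext.covariant_sequence_exact₁ X (T.shortExact (i + 1)) e he
            (n₀ := k * (m + 1) + m) (by ring)
          rw [van_down T HZ (m + 1 - (i + 2)) (i + 2) k m (by omega) (by omega) (by omega) y,
            Ext.zero_comp]
    obtain ⟨p, hp, hp'⟩ := hd
    obtain ⟨q, hq, hq'⟩ := hd'
    intro e
    constructor
    · intro he
      dsimp only at he
      rw [hq, comp_mk0] at he
      obtain ⟨x, hx⟩ := Ext.covariant_sequence_exact₂ X (T.shortExact i) e (hq' _ he)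
      obtain ⟨x', rfl⟩ := hp' x
      refine ⟨x', ?_⟩
      dsimp only
      rw [hp, comp_mk0]
      exact hx
    · rintro ⟨x, rfl⟩
      dsimp only
      rw [← comp_mk0, hp, hq, Category.assoc, ← Category.assoc (T.ι i), T.zero]
      simp
  · intro k e
    dsimp only
    rw [comp_extClass]
    constructor
    · intro he
      replace he := iso_inj _ _ he
      rw [ExactExtension.chainClass,
        ← Ext.comp_assoc (a₁₂ := k * (m + 1) + 1) _ _ _ rfl _ (by ring)] at he
      have h0 := chain_inj T HZ m (by omega) k _ _ _ rfl _ he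
      obtain ⟨x, hx⟩ := Ext.covariant_sequence_exact₃ X (T.shortExact m) _ rfl h0
      refine ⟨x, ?_⟩
      dsimp only at hx ⊢
      rw [T.dlast_eq, comp_mk0, hx, ← comp_mk0]
      simp
    · rintro ⟨x, rfl⟩
      dsimp only
      rw [← comp_mk0, T.dlast_eq, Category.assoc, eqToHom_trans, eqToHom_refl, Category.comp_id,
        ExactExtension.chainClass, Ext.comp_assoc_of_second_deg_zero,
        ← Ext.comp_assoc (a₁₂ := 1) (Ext.mk₀ (T.π (m + 1))) _ _ (zero_add 1) _ (by omega)]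
      have := (T.shortExact m).comp_extClass
      dsimp only at this
      rw [this, Ext.zero_comp, Ext.comp_zero, Ext.zero_comp]
  · intro k e
    dsimp only
    rw [d0_eq', comp_mk0]
    constructor
    · intro he
      obtain ⟨x, hx⟩ := chain_surj T HZ m le_rfl k (k * (m + 1)) _ (by ring) rfl _ he
      refine ⟨x.comp (Ext.mk₀ (eqToHom T.hKm)) (add_zero _), ?_⟩
      dsimp only
      rw [comp_extClass, ← comp_mk0 x, eqToHom_trans, eqToHom_refl, Ext.comp_mk₀_id, hx,
        ← comp_mk0]
      simp
    · rintro ⟨x, rfl⟩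
      dsimp only
      rw [comp_extClass, ← comp_mk0 _ (eqToHom T.hK0), eqToHom_trans, eqToHom_refl,
        Ext.comp_mk₀_id, Ext.comp_assoc_of_third_deg_zero, chain_iota, Ext.comp_zero]

end NZPaper
end

section
/- Let 𝓔 be an abelian category, n ≥ 1, and M an n-cluster tilting subcategory of 𝓔. Suppose that for every object X ∈ M and every n-exact sequence Y : Y⁰ → Y¹ → ⋯ → Yⁿ → Y^{n+1} in M, the induced sequence of abelian groups 0 → Hom(X,Y⁰) → ⋯ → Hom(X,Y^{n+1}) → Extⁿ(X,Y⁰) → ⋯ → Extⁿ(X,Y^{n+1}) → Ext²ⁿ(X,Y⁰) → ⋯ is exact at every spot (maps within each row induced by the differentials of Y, and each connecting map Ext^{kn}(X,Y^{n+1}) → Ext^{(k+1)n}(X,Y⁰) given by Yoneda composition with [Y] ∈ Extⁿ(Y^{n+1},Y⁰)). Then M is an nℤ-cluster tilting subcategory, i.e., Ext^k(X,Y)=0 for all X,Y ∈ M and all k ≥ 1 not divisible by n. -/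
open CategoryTheory CategoryTheory.Abelian CategoryTheory.Limits

universe w v u

namespace NZPaper

section Efface

variable {C : Type u} [Category.{v} C] [Abelian C]

open HomologicalComplex DerivedCategory

set_option maxHeartbeats 1000000 in
lemma exists_mono_from_single {Y : C} {L : HomologicalComplex C (ComplexShape.up ℤ)} {i : ℤ}
    (ι : (HomologicalComplex.single C (ComplexShape.up ℤ) i).obj Y ⟶ L) [CochainComplex.IsStrictlyGE L i] [QuasiIsoAt ι i] :
    ∃ (E : C) (α : Y ⟶ E) (ρ : L ⟶ (HomologicalComplex.single C (ComplexShape.up ℤ) i).obj E),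
      Mono α ∧ ι ≫ ρ = (HomologicalComplex.single C (ComplexShape.up ℤ) i).map α := by
  let e := HomologicalComplex.pOpcyclesIso L (i - 1) i (by simp)
    ((CochainComplex.isZero_of_isStrictlyGE L i (i - 1) (by simp)).eq_of_src _ _)
  let α : Y ⟶ L.X i :=
    (singleObjHomologySelfIso _ _ _).inv ≫ homologyMap ι i ≫ L.homologyι i ≫ e.inv
  have : ι.f i = (singleObjXSelf (ComplexShape.up ℤ) i Y).hom ≫ α := by
    rw [← cancel_mono e.hom]
    dsimp [α, e]
    rw [Category.assoc, Category.assoc, Category.assoc, Category.assoc, Iso.inv_hom_id,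
      Category.comp_id, homologyι_naturality]
    rw [singleObjHomologySelfIso_inv_homologyι_assoc]
    rw [← pOpcycles_singleObjOpcyclesSelfIso_inv_assoc, Iso.inv_hom_id_assoc, p_opcyclesMap]
    rfl
  have hα : Mono α := by
    have : IsIso (homologyMap ι i) := inferInstance
    dsimp only [α]
    infer_instance
  refine ⟨L.X i, α, mkHomToSingle (𝟙 _) (by
      rintro j hj
      apply (CochainComplex.isZero_of_isStrictlyGE L i j (by simp at hj; omega)).eq_of_src), hα, ?_⟩
  apply to_single_hom_ext
  rw [comp_f, mkHomToSingle_f, this]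
  rw [single_map_f_self]
  simp

lemma exists_mono_kill_derived [HasDerivedCategory.{w} C] {Y : C}
    {K : CochainComplex C ℤ} {i : ℤ}
    (φ : Q.obj K ⟶ Q.obj ((CochainComplex.singleFunctor C i).obj Y))
    (n : ℤ) (hn : i < n) [K.IsStrictlyGE n] :
    ∃ (E : C) (α : Y ⟶ E), Mono α ∧
      φ ≫ Q.map ((CochainComplex.singleFunctor C i).map α) = 0 := by
  obtain ⟨L, _, g, ι, h, rfl⟩ := left_fac_of_isStrictlyGE φ i
  have hq := h
  rw [isIso_Q_map_iff_quasiIso] at hq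
  have hqi : QuasiIsoAt ι i := inferInstance
  have hex : ∃ (E : C) (α : Y ⟶ E) (ρ : L ⟶ (CochainComplex.singleFunctor C i).obj E),
      Mono α ∧ ι ≫ ρ = (CochainComplex.singleFunctor C i).map α :=
    @exists_mono_from_single C _ _ Y L i ι _ hqi
  obtain ⟨E, α, ρ, hα, hρ⟩ := hex
  refine ⟨E, α, hα, ?_⟩
  have h₂ : g ≫ ρ = 0 := by
    apply HomologicalComplex.to_single_hom_ext
    apply (K.isZero_of_isStrictlyGE n i hn).eq_of_src
  rw [← hρ, Q.map_comp, Category.assoc, IsIso.inv_hom_id_assoc, ← Q.map_comp, h₂, Q.map_zero]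

lemma exists_mono_kill [HasExt.{w} C] {X Y : C} {n : ℕ} (e : Ext X Y (n + 1)) :
    ∃ (E : C) (α : Y ⟶ E), Mono α ∧ e.comp (Ext.mk₀ α) (add_zero _) = 0 := by
  let K := (CochainComplex.singleFunctor C 0).obj X
  have := K.isStrictlyGE_of_ge (-n) 0 (by lia)
  let := HasDerivedCategory.standard C
  obtain ⟨E, α, hα, h⟩ := exists_mono_kill_derived (K := K) (i := -(n+1))
    (e.hom ≫ ((singleFunctors C).shiftIso (n + 1) (-(n + 1)) 0 (by lia)).hom.app Y)
    (-n) (by lia)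
  refine ⟨E, α, hα, ?_⟩
  apply Ext.homEquiv.injective
  change (e.comp (Ext.mk₀ α) (add_zero _)).hom = (0 : Ext X E (n+1)).hom
  rw [← Ext.hom_comp_singleFunctor_map_shift]
  rw [← cancel_mono (((singleFunctors C).shiftIso (n + 1) (-(n + 1)) 0
    (by lia)).hom.app _), Ext.zero_hom, Limits.zero_comp, Category.assoc]
  have nat := ((singleFunctors C).shiftIso (n + 1 : ℤ) (-(n + 1)) 0 (by lia)).hom.naturality α
  erw [nat]
  exact (Category.assoc _ _ _).symm.trans h

end Efface

section Construction

variable {C : Type u} [Category.{v} C] [Abelian C]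

/-- A monomorphism from `K`. -/
structure Ob (K : C) where
  A : C
  f : K ⟶ A
  mono : Mono f

/-- The trivial monomorphism. -/
def Ob.triv (K : C) : Ob K := ⟨K, 𝟙 K, inferInstance⟩

/-- A monomorphism. -/
structure St (C : Type u) [Category.{v} C] where
  K : C
  o : Ob K

/-- Iterated cosyzygies. -/
noncomputable def cosyz (n : ℕ) (s₀ : St C) (ap : ∀ K : C, Ob K) : ℕ → St C
  | 0 => s₀
  | (j + 1) => ⟨cokernel (cosyz n s₀ ap j).o.f,
      if j + 1 < n then ap (cokernel (cosyz n s₀ ap j).o.f)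
      else Ob.triv (cokernel (cosyz n s₀ ap j).o.f)⟩

lemma cosyz_last (n : ℕ) (hn : 1 ≤ n) (s₀ : St C) (ap : ∀ K : C, Ob K) :
    ∃ h : (cosyz n s₀ ap n).K = (cosyz n s₀ ap n).o.A,
      (cosyz n s₀ ap n).o.f = eqToHom h := by
  obtain ⟨m, rfl⟩ : ∃ m, n = m + 1 := ⟨n - 1, by omega⟩
  have h2 : cosyz (m + 1) s₀ ap (m + 1) = ⟨cokernel (cosyz (m + 1) s₀ ap m).o.f,
      Ob.triv (cokernel (cosyz (m + 1) s₀ ap m).o.f)⟩ := by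
    rw [cosyz, if_neg (lt_irrefl _)]
  rw [h2]
  exact ⟨rfl, rfl⟩

lemma cosyz_mid (n : ℕ) (s₀ : St C) (ap : ∀ K : C, Ob K) (j : ℕ) (hj : 1 ≤ j) (hjn : j < n) :
    cosyz n s₀ ap j = ⟨(cosyz n s₀ ap j).K, ap _⟩ := by
  obtain ⟨m, rfl⟩ : ∃ m, j = m + 1 := ⟨j - 1, by omega⟩
  simp only [cosyz]
  rw [if_pos hjn]

/-- The objects of the extension. -/
noncomputable def cosyzY (n : ℕ) (s₀ : St C) (ap : ∀ K : C, Ob K) : ℕ → C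
  | 0 => s₀.K
  | (j + 1) => (cosyz n s₀ ap j).o.A

/-- The projections. -/
noncomputable def cosyzπ (n : ℕ) (s₀ : St C) (ap : ∀ K : C, Ob K) :
    ∀ j, cosyzY n s₀ ap j ⟶ (cosyz n s₀ ap j).K
  | 0 => 𝟙 s₀.K
  | (j + 1) => cokernel.π (cosyz n s₀ ap j).o.f

/-- The extension. -/
noncomputable def cosyzExt (n : ℕ) (hn : 1 ≤ n) (s₀ : St C) (ap : ∀ K : C, Ob K) :
    ExactExtension C n where
  Y := cosyzY n s₀ ap
  d i := cosyzπ n s₀ ap i ≫ (cosyz n s₀ ap i).o.f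
  K i := (cosyz n s₀ ap i).K
  ι i := (cosyz n s₀ ap i).o.f
  π i := cosyzπ n s₀ ap i
  hK0 := rfl
  hKm := (cosyz_last n hn s₀ ap).choose
  zero i := cokernel.condition (cosyz n s₀ ap i).o.f
  shortExact i := by
    have := (cosyz n s₀ ap i).o.mono
    exact
      { exact := ShortComplex.exact_of_g_is_cokernel _
          (cokernelIsCokernel (cosyz n s₀ ap i).o.f)
        mono_f := this
        epi_g := inferInstanceAs (Epi (cokernel.π (cosyz n s₀ ap i).o.f)) }
  d0_eq := by
    erw [eqToHom_refl, Category.id_comp]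
    exact Category.id_comp _
  dmid_eq i _ _ := rfl
  dlast_eq := congrArg (fun g => cosyzπ n s₀ ap n ≫ g) (cosyz_last n hn s₀ ap).choose_spec

variable [HasExt.{w} C]

lemma exists_extension (n : ℕ) (hn : 1 ≤ n) (M : Set C) (hM : IsNClusterTilting n M)
    (s₀ : St C) (h0 : s₀.K ∈ M) (h1 : s₀.o.A ∈ M) :
    ∃ ap : ∀ K : C, Ob K, ∀ i ≤ n + 1, (cosyzExt n hn s₀ ap).Y i ∈ M := by
  obtain ⟨hiso, hl, hr, hL, hR⟩ := hM
  choose A f hA hf happ using hl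
  refine ⟨fun K => ⟨A K, f K, hf K⟩, ?_⟩
  set T := cosyzExt n hn s₀ (fun K => ⟨A K, f K, hf K⟩) with hT
  have hY : ∀ i ≤ n, T.Y i ∈ M := by
    intro i hi
    match i, hi with
    | 0, _ => exact h0
    | 1, _ => exact h1
    | (j + 2), hi =>
      change (cosyz n s₀ (fun K => ⟨A K, f K, hf K⟩) (j + 1)).o.A ∈ M
      rw [cosyz_mid n s₀ _ (j + 1) (by omega) (by omega)]
      exact hA _
  have hap : ∀ j, 1 ≤ j → j < n → ∀ X' ∈ M, ∀ g : T.K j ⟶ X', ∃ h, T.ι j ≫ h = g := by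
    intro j hj hjn X' hX'
    have key : ∀ s : St C, s = ⟨s.K, ⟨A s.K, f s.K, hf s.K⟩⟩ → ∀ g : s.K ⟶ X',
        ∃ h, s.o.f ≫ h = g := by
      intro s hs
      rw [hs]
      exact happ s.K X' hX'
    exact key _ (cosyz_mid n s₀ (fun K => ⟨A K, f K, hf K⟩) j hj hjn)
  have hv : ∀ j ≤ n, ∀ Z ∈ M, ∀ i, 1 ≤ i → i < n → i ≠ j → ∀ e : Ext (T.K j) Z i, e = 0 := by
    intro j
    induction j with
    | zero =>
      intro _ Z hZ i h1 h2 _ e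
      exact (hL (T.K 0)).1 h0 Z hZ i h1 h2 e
    | succ j ih =>
      intro hj Z hZ i h1 h2 h3 e
      obtain ⟨i', rfl⟩ : ∃ i', i = 1 + i' := ⟨i - 1, by omega⟩
      obtain ⟨y, rfl⟩ := Ext.contravariant_sequence_exact₃ (T.shortExact j) Z e
        ((hL (T.Y (j + 1))).1 (hY _ hj) Z hZ _ h1 h2 _) (n₀ := i') rfl
      by_cases hi : i' = 0
      · subst hi
        obtain ⟨g, rfl⟩ := (Ext.mk₀_bijective _ _).2 y
        obtain ⟨h, rfl⟩ := hap j (by omega) (by omega) Z hZ g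
        rw [← Ext.mk₀_comp_mk₀]
        exact (T.shortExact j).extClass_comp_assoc _
      · rw [ih (by omega) Z hZ i' (by omega) (by omega) (by omega) y, Ext.comp_zero]
  intro i hi
  rcases Nat.lt_or_ge n i with h | h
  · obtain rfl : i = n + 1 := by omega
    rw [← T.hKm]
    exact (hL _).2 fun Z hZ i h1 h2 e => hv n le_rfl Z hZ i h1 h2 (by omega) e
  · exact hY i h

end Construction

section Main

variable {C : Type u} [Category.{v} C] [Abelian C] [HasExt.{w} C]

lemma main_chase (n : ℕ) (M : Set C) (T : ExactExtension C n)
    (hT : ∀ i ≤ n + 1, T.Y i ∈ M) (X : C) (hLES : CovLES n X T)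
    (q r : ℕ) (hr0 : 0 < r) (hrn : r < n) (hq : 1 ≤ q)
    (ih : ∀ a < q * n + r, 1 ≤ a → ¬ n ∣ a → ∀ Z ∈ M, ∀ e : Ext X Z a, e = 0)
    (e : Ext X (T.K 0) (q * n + r)) (he : e.comp (Ext.mk₀ (T.ι 0)) (add_zero _) = 0) :
    e = 0 := by
  have hqn : n ≤ q * n := Nat.le_mul_of_pos_left n hq
  have ndvd1 : ∀ b, 0 < b → b < n → ¬ n ∣ q * n + b := by
    intro b h0 h1 h
    exact Nat.not_dvd_of_pos_of_lt h0 h1 ((Nat.dvd_add_right (Dvd.intro_left q rfl)).1 h)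
  have ndvd2 : ∀ a b, 0 < b → b < n → a + b = q * n → ¬ n ∣ a := by
    intro a b h0 h1 hab h
    exact Nat.not_dvd_of_pos_of_lt h0 h1
      ((Nat.dvd_add_right h).1 (hab ▸ Dvd.intro_left q rfl))
  have B : ∀ t j a, j + t = n → r < j → a + j = q * n + r →
      ∀ x : Ext X (T.K j) a, x = 0 := by
    intro t
    induction t with
    | zero =>
      intro j a hj hrj ha
      obtain rfl : j = n := by omega
      rw [T.hKm]
      exact ih a (by omega) (by omega) (ndvd2 a (j - r) (by omega) (by omega) (by omega)) _
        (hT _ le_rfl)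
    | succ t iht =>
      intro j a hj hrj ha x
      obtain ⟨a', rfl⟩ : ∃ a', a = a' + 1 := ⟨a - 1, by omega⟩
      obtain ⟨y, rfl⟩ := Ext.covariant_sequence_exact₁ X (T.shortExact j) x
        (ih (a' + 1) (by omega) (by omega)
          (ndvd2 _ (j - r) (by omega) (by omega) (by omega)) _ (hT (j + 1) (by omega)) _)
        (n₀ := a') rfl
      rw [iht (j + 1) a' (by omega) (by omega) (by omega) y, Ext.zero_comp]
  have mid : ∀ f : Ext X (T.K r) (q * n), ∃ g : Ext X (T.Y r) (q * n),
      g.comp (Ext.mk₀ (T.π r)) (add_zero _) = f := by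
    intro f
    have hex := hLES.2.1 q r hrn
    have hz : T.ι r ≫ T.d (r + 1) = 0 := by
      rcases Nat.lt_or_ge (r + 1) n with h | h
      · rw [T.dmid_eq (r + 1) (by omega) (by omega), ← Category.assoc, T.zero, zero_comp]
      · obtain rfl : n = r + 1 := by omega
        rw [T.dlast_eq, ← Category.assoc, T.zero, zero_comp]
    obtain ⟨g, hg⟩ := (hex (f.comp (Ext.mk₀ (T.ι r)) (add_zero _))).1 (by
      dsimp only
      rw [Ext.comp_assoc_of_third_deg_zero, Ext.mk₀_comp_mk₀, hz, Ext.mk₀_zero, Ext.comp_zero])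
    dsimp only at hg
    refine ⟨g, ?_⟩
    rw [← sub_eq_zero]
    obtain ⟨y, hy⟩ := Ext.covariant_sequence_exact₁ X (T.shortExact r)
      (g.comp (Ext.mk₀ (T.π r)) (add_zero _) - f) (by
        dsimp only
        rw [sub_eq_add_neg, Ext.add_comp, Ext.neg_comp, ← sub_eq_add_neg, sub_eq_zero, ← hg,
          Ext.comp_assoc_of_third_deg_zero, Ext.mk₀_comp_mk₀, T.dmid_eq r hr0 hrn])
        (n₀ := q * n - 1) (by omega)
    rw [← hy, B (n - (r + 1)) (r + 1) _ (by omega) (by omega) (by omega) y, Ext.zero_comp]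
  have A : ∀ t j a (b : ℕ) (hb : a + 1 = b), j + 1 + t = r → a + (j + 1) = q * n + r →
      ∀ x : Ext X (T.K (j + 1)) a, x.comp (T.shortExact j).extClass hb = 0 := by
    intro t
    induction t with
    | zero =>
      intro j a b hb hj ha x
      obtain rfl : r = j + 1 := by omega
      obtain rfl : a = q * n := by omega
      obtain ⟨g, rfl⟩ := mid x
      rw [Ext.comp_assoc_of_second_deg_zero]
      have := (T.shortExact j).comp_extClass
      dsimp only at this
      rw [this, Ext.comp_zero]
    | succ t iht =>
      intro j a b hb hj ha x
      obtain ⟨a', rfl⟩ : ∃ a', a = a' + 1 := ⟨a - 1, by omega⟩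
      obtain ⟨y, rfl⟩ := Ext.covariant_sequence_exact₁ X (T.shortExact (j + 1)) x
        (ih (a' + 1) (by omega) (by omega)
          (by
            have := ndvd1 (t + 1) (by omega) (by omega)
            rwa [show a' + 1 = q * n + (t + 1) by omega]) _ (hT (j + 1 + 1) (by omega)) _)
        (n₀ := a') rfl
      rw [iht (j + 1) a' _ rfl (by omega) (by omega) y, Ext.zero_comp]
  obtain ⟨y, rfl⟩ := Ext.covariant_sequence_exact₁ X (T.shortExact 0) e he
    (n₀ := q * n + r - 1) (by omega)
  exact A (r - 1) 0 _ _ _ (by omega) (by omega) y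

end Main


/-- Let `𝓔` be an abelian category, `n ≥ 1`, and `M` an `n`-cluster tilting
subcategory of `𝓔`.  If for every `X ∈ M` and every `n`-exact sequence `Y` in `M` the induced
covariant long sequence of `Ext`-groups is exact at every spot, then `M` is an `nℤ`-cluster
tilting subcategory, i.e. `Ext^k(X,Y) = 0` for all `X, Y ∈ M` and all `k ≥ 1` not divisible
by `n`. -/
theorem nZ_cluster_tilting_of_covariant_les
    {C : Type u} [Category.{v} C] [Abelian C] [HasExt.{w} C]
    (n : ℕ) (hn : 1 ≤ n) (M : Set C) (hM : IsNClusterTilting n M)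
    (H : ∀ T : ExactExtension C n, (∀ i ≤ n + 1, T.Y i ∈ M) →
      ∀ X ∈ M, CovLES n X T) :
    ∀ X ∈ M, ∀ Y ∈ M, ∀ k : ℕ, 1 ≤ k → ¬ (n ∣ k) → ∀ e : Ext X Y k, e = 0 := by
  intro X hX Y hY k
  induction k using Nat.strong_induction_on generalizing Y with
  | _ k ih =>
  intro hk hnk e
  rcases Nat.lt_or_ge k n with hkn | hkn
  · exact (hM.2.2.2.1 X).1 hX Y hY k hk hkn e
  · obtain ⟨k', rfl⟩ : ∃ k', k = k' + 1 := ⟨k - 1, by omega⟩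
    obtain ⟨E, α, hα, hαe⟩ := exists_mono_kill e
    obtain ⟨A, f, hA, hf, -⟩ := hM.2.1 E
    have hmono : Mono (α ≫ f) := mono_comp _ _
    obtain ⟨ap, hap⟩ := exists_extension n hn M hM ⟨Y, ⟨A, α ≫ f, hmono⟩⟩ hY hA
    have hLES := H _ hap X hX
    have hdiv : k' + 1 = (k' + 1) / n * n + (k' + 1) % n := (Nat.div_add_mod' _ _).symm
    have hr0 : 0 < (k' + 1) % n := Nat.pos_of_ne_zero fun h => hnk (Nat.dvd_of_mod_eq_zero h)
    have hrn : (k' + 1) % n < n := Nat.mod_lt _ hn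
    have hq : 1 ≤ (k' + 1) / n := Nat.div_pos hkn hn
    have he : e.comp (Ext.mk₀ (α ≫ f)) (add_zero _) = 0 := by
      rw [← Ext.mk₀_comp_mk₀, ← Ext.comp_assoc_of_third_deg_zero, hαe, Ext.zero_comp]
    generalize (k' + 1) / n = q at *
    generalize (k' + 1) % n = r at *
    generalize k' + 1 = k at *
    subst hdiv
    exact main_chase n M _ hap X hLES q r hr0 hrn hq
      (fun a ha h1 hna Z hZ e => ih a ha Z hZ h1 hna e) e he

end NZPaper
end

section
/- Let 𝓔 be an abelian category, n ≥ 1, and M an nℤ-cluster tilting subcategory of 𝓔. Then for every object Y ∈ M and every n-exact sequence X : X⁰ → X¹ → ⋯ → Xⁿ → X^{n+1} in M, the induced sequence of abelian groups 0 → Hom(X^{n+1},Y) → Hom(Xⁿ,Y) → ⋯ → Hom(X⁰,Y) → Extⁿ(X^{n+1},Y) → ⋯ → Extⁿ(X⁰,Y) → Ext²ⁿ(X^{n+1},Y) → ⋯ is exact at every spot, where within each row the maps are induced by the differentials of X and each connecting map Ext^{kn}(X⁰,Y) → Ext^{(k+1)n}(X^{n+1},Y) is Yoneda precomposition with the class [X]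 ∈ Extⁿ(X^{n+1},X⁰). -/
open CategoryTheory CategoryTheory.Abelian CategoryTheory.Limits

universe w v u

namespace NZPaper

section Aux

variable {C : Type u} [Category.{v} C] [Abelian C] [HasExt.{w} C]

lemma eqHom_comp_inj {A B Z : C} (h : A = B) {a : ℕ} (e : Ext B Z a)
    (he : (Ext.mk₀ (eqToHom h)).comp e (zero_add a) = 0) : e = 0 := by
  subst h
  simpa using he

lemma eqHom_comp_surj {A B Z : C} (h : A = B) {a : ℕ} (e : Ext A Z a) :
    ∃ e' : Ext B Z a, (Ext.mk₀ (eqToHom h)).comp e' (zero_add a) = e := by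
  subst h
  exact ⟨e, by simp⟩

variable {n : ℕ} (T : ExactExtension C n)

lemma extClass_comp_eq {Z : C} {a c : ℕ} (e : Ext (T.Y 0) Z a) (h : n + a = c) :
    T.extClass.comp e h = (Ext.mk₀ (eqToHom T.hKm.symm)).comp
      ((T.chainClass n).comp ((Ext.mk₀ (eqToHom T.hK0)).comp e (zero_add a)) h) (zero_add c) := by
  unfold ExactExtension.extClass
  rw [Ext.comp_assoc _ _ _ (zero_add n) h (by omega), Ext.comp_assoc_of_second_deg_zero]

lemma chain_succ_comp {Z : C} {a c : ℕ} (j : ℕ) (e : Ext (T.K 0) Z a) (h : j + 1 + a = c) :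
    (T.chainClass (j + 1)).comp e h =
      (T.shortExact j).extClass.comp ((T.chainClass j).comp e rfl) (by omega) := by
  rw [ExactExtension.chainClass]
  exact Ext.comp_assoc _ _ _ _ rfl (by omega)

lemma chain_one_comp {Z : C} {a c : ℕ} (e : Ext (T.K 0) Z a) (h : 0 + 1 + a = c) :
    (T.chainClass (0 + 1)).comp e h = (T.shortExact 0).extClass.comp e (by omega) := by
  have : T.chainClass (0 + 1) = (T.shortExact 0).extClass :=
    Ext.comp_mk₀_id _
  rw [this]

variable {Z : C} (hv : ∀ i ≤ n + 1, ∀ a, 1 ≤ a → ¬ n ∣ a → ∀ e : Ext (T.Y i) Z a, e = 0)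
  (hv0 : ∀ a, 1 ≤ a → ¬ n ∣ a → ∀ e : Ext (T.K 0) Z a, e = 0)
  (hvn : ∀ a, 1 ≤ a → ¬ n ∣ a → ∀ e : Ext (T.K n) Z a, e = 0)

lemma ndvd {n k c : ℕ} (h1 : 1 ≤ c) (h2 : c < n) : ¬ n ∣ k * n + c := by
  intro h
  have := (Nat.dvd_add_right (Dvd.intro_left k rfl)).1 h
  exact absurd (Nat.le_of_dvd h1 this) (by omega)

include hv hv0 in
lemma vanishC (k : ℕ) : ∀ j c, j < c → c < n → ∀ e : Ext (T.K j) Z (k * n + c), e = 0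
  | 0, c, h1, h2, e => hv0 _ (by omega) (ndvd h1 h2) e
  | j + 1, c, h1, h2, e => by
    obtain ⟨x, hx⟩ := Ext.contravariant_sequence_exact₃ (T.shortExact j) Z e
      (hv (j + 1) (by omega) _ (by omega) (ndvd (by omega) h2) _)
      (n₀ := k * n + (c - 1)) (by omega)
    rw [← hx, vanishC k j (c - 1) (by omega) (by omega) x, Ext.comp_zero]

include hv hvn in
lemma vanishD (k : ℕ) : ∀ s j c, j + s = n → 1 ≤ c → c < j →
    ∀ e : Ext (T.K j) Z (k * n + c), e = 0
  | 0, j, c, h0, h1, h2, e => by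
    obtain rfl : j = n := by omega
    exact hvn _ (by omega) (ndvd h1 h2) e
  | s + 1, j, c, h0, h1, h2, e => by
    obtain ⟨x, hx⟩ := Ext.contravariant_sequence_exact₁ (T.shortExact j) Z e
      (n₁ := k * n + (c + 1)) (by omega)
      (vanishD k s (j + 1) (c + 1) (by omega) (by omega) (by omega) _)
    rw [← hx, hv (j + 1) (by omega) _ (by omega) (ndvd h1 (by omega)) x, Ext.comp_zero]

include hv in
lemma chain_inj_s2 (k : ℕ) (e : Ext (T.K 0) Z (k * n)) : ∀ j c, j < n → ∀ h : j + 1 + k * n = c,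
    (T.chainClass (j + 1)).comp e h = 0 →
    (T.shortExact 0).extClass.comp e rfl = 0
  | 0, c, h1, h, he => by
    subst h
    rw [chain_one_comp] at he
    exact he
  | j + 1, c, h1, h, he => by
    rw [chain_succ_comp] at he
    obtain ⟨x, hx⟩ := Ext.contravariant_sequence_exact₁ (T.shortExact (j + 1)) Z _ _ he
    have hx0 : x = 0 := hv (j + 1 + 1) (by omega) _ (by omega)
      (by rw [add_comm]; exact ndvd (by omega) h1) x
    rw [hx0, Ext.comp_zero] at hx
    exact chain_inj_s2 k e j _ (by omega) rfl hx.symm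

include hv in
lemma chain_surj_s2 (k : ℕ) : ∀ j c, j < n → ∀ h : j + k * n = c, ∀ y : Ext (T.K j) Z c,
    ∃ e : Ext (T.K 0) Z (k * n), (T.chainClass j).comp e h = y
  | 0, c, h1, h, y => by
    obtain rfl : k * n = c := by omega
    exact ⟨y, by simp [ExactExtension.chainClass]⟩
  | j + 1, c, h1, h, y => by
    obtain ⟨x, hx⟩ := Ext.contravariant_sequence_exact₃ (T.shortExact j) Z y
      (hv (j + 1) (by omega) _ (by omega)
        (by rw [← h, add_comm]; exact ndvd (by omega) h1) _)
      (n₀ := j + k * n) (by omega)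
    obtain ⟨e, he⟩ := chain_surj_s2 k j _ (by omega) rfl x
    exact ⟨e, by rw [chain_succ_comp, he, hx]⟩

include hv hv0 in
lemma pi_inj (k i : ℕ) (h1 : 1 ≤ i) (h2 : i < n) (e : Ext (T.K i) Z (k * n))
    (he : (Ext.mk₀ (T.π i)).comp e (zero_add _) = 0) : e = 0 := by
  obtain ⟨i, rfl⟩ : ∃ j, i = j + 1 := ⟨i - 1, by omega⟩
  rcases k with _ | k
  · have hz : (0 : ℕ) * n = 0 := by omega
    revert e
    rw [hz]
    intro e he
    have : Epi (T.π (i + 1)) := (T.shortExact i).epi_g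
    apply Ext.precomp_mk₀_injective_of_epi Z (T.π (i + 1))
    simpa using he
  · have hk : (k + 1) * n = k * n + n := by ring
    obtain ⟨x, hx⟩ := Ext.contravariant_sequence_exact₃ (T.shortExact i) Z e he
      (n₀ := k * n + (n - 1)) (by omega)
    rw [← hx, vanishC T hv hv0 k i (n - 1) (by omega) (by omega) x, Ext.comp_zero]

lemma d_comp_d (i : ℕ) (hi : i < n) : T.d i ≫ T.d (i + 1) = 0 := by
  have h1 : ∃ p, T.d i = p ≫ T.ι i := by
    rcases i with _ | i
    · exact ⟨eqToHom T.hK0.symm, by rw [← T.d0_eq]; simp⟩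
    · exact ⟨_, T.dmid_eq _ (by omega) (by omega)⟩
  have h2 : ∃ q, T.d (i + 1) = T.π (i + 1) ≫ q := by
    rcases Nat.lt_or_ge (i + 1) n with h | h
    · exact ⟨_, T.dmid_eq _ (by omega) (by omega)⟩
    · obtain rfl : n = i + 1 := by omega
      exact ⟨_, T.dlast_eq⟩
  obtain ⟨p, hp⟩ := h1
  obtain ⟨q, hq⟩ := h2
  rw [hp, hq, Category.assoc, ← Category.assoc (T.ι i), T.zero]
  simp

include hv hv0 in
lemma iota_zero (k i : ℕ) (hi : i < n) (x : Ext (T.Y (i + 1)) Z (k * n))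
    (hx : (Ext.mk₀ (T.d i)).comp x (zero_add _) = 0) :
    (Ext.mk₀ (T.ι i)).comp x (zero_add _) = 0 := by
  rcases i with _ | i
  · rw [← T.d0_eq, ← Ext.mk₀_comp_mk₀_assoc, hx, Ext.comp_zero]
  · rw [T.dmid_eq _ (by omega) (by omega), ← Ext.mk₀_comp_mk₀_assoc] at hx
    exact pi_inj T hv hv0 k (i + 1) (by omega) hi _ hx

include hv hvn in
lemma pi_lift (k i : ℕ) (hi : i < n) (y : Ext (T.K (i + 1)) Z (k * n)) :
    ∃ z : Ext (T.Y (i + 2)) Z (k * n), (Ext.mk₀ (T.d (i + 1))).comp z (zero_add _) =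
      (Ext.mk₀ (T.π (i + 1))).comp y (zero_add _) := by
  rcases Nat.lt_or_ge (i + 1) n with h | h
  · obtain ⟨z, hz⟩ := Ext.contravariant_sequence_exact₁ (T.shortExact (i + 1)) Z y
      (n₁ := k * n + 1) (by omega)
      (vanishD T hv hvn k (n - (i + 2)) (i + 2) 1 (by omega) (by omega) (by omega) _)
    refine ⟨z, ?_⟩
    rw [T.dmid_eq _ (by omega) (by omega), ← Ext.mk₀_comp_mk₀_assoc]
    dsimp only at hz
    rw [hz]
  · obtain rfl : n = i + 1 := by omega
    obtain ⟨z, hz⟩ := eqHom_comp_surj T.hKm y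
    refine ⟨z, ?_⟩
    rw [T.dlast_eq, ← Ext.mk₀_comp_mk₀_assoc, hz]

end Aux

theorem contravariant_les_of_nZ_cluster_tilting
    {C : Type u} [Category.{v} C] [Abelian C] [HasExt.{w} C]
    (n : ℕ) (hn : 1 ≤ n) (M : Set C) (hM : IsNZClusterTilting n M)
    (Y : C) (hY : Y ∈ M)
    (T : ExactExtension C n) (hT : ∀ i ≤ n + 1, T.Y i ∈ M) :
    ContraLES n Y T := by
  have hv : ∀ i ≤ n + 1, ∀ a, 1 ≤ a → ¬ n ∣ a → ∀ e : Ext (T.Y i) Y a, e = 0 :=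
    fun i hi a h1 h2 e => hM.2 _ (hT i hi) _ hY a h1 h2 e
  have hv0 : ∀ a, 1 ≤ a → ¬ n ∣ a → ∀ e : Ext (T.K 0) Y a, e = 0 :=
    fun a h1 h2 e => hM.2 _ (by rw [T.hK0]; exact hT _ (by omega)) _ hY a h1 h2 e
  have hvn : ∀ a, 1 ≤ a → ¬ n ∣ a → ∀ e : Ext (T.K n) Y a, e = 0 :=
    fun a h1 h2 e => hM.2 _ (by rw [T.hKm]; exact hT _ (by omega)) _ hY a h1 h2 e
  obtain ⟨m, rfl⟩ : ∃ m, n = m + 1 := ⟨n - 1, by omega⟩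
  refine ⟨?_, ?_, ?_, ?_⟩
  · have : Epi (T.π (m + 1)) := (T.shortExact m).epi_g
    have : Epi (T.d (m + 1)) := by rw [T.dlast_eq]; infer_instance
    exact Ext.precomp_mk₀_injective_of_epi Y (T.d (m + 1))
  · intro k i hi x
    constructor
    · intro hx
      obtain ⟨y, hy⟩ := Ext.contravariant_sequence_exact₂ (T.shortExact i) Y x
        (iota_zero T hv hv0 k i hi x hx)
      obtain ⟨z, hz⟩ := pi_lift T hv hvn k i hi y
      exact ⟨z, hz.trans hy⟩
    · rintro ⟨z, rfl⟩
      dsimp only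
      rw [Ext.mk₀_comp_mk₀_assoc, d_comp_d T i hi]
      simp
  · intro k x
    constructor
    · intro hx
      dsimp only at hx
      rw [extClass_comp_eq] at hx
      have h1 := chain_inj_s2 T hv k _ m _ (by omega) _ (eqHom_comp_inj _ _ hx)
      obtain ⟨z, hz⟩ := Ext.contravariant_sequence_exact₁ (T.shortExact 0) Y _ _ h1
      refine ⟨z, ?_⟩
      dsimp only at hz ⊢
      rw [← sub_eq_zero]
      apply eqHom_comp_inj T.hK0
      rw [sub_eq_add_neg, Ext.comp_add, Ext.comp_neg, ← sub_eq_add_neg, sub_eq_zero,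
        Ext.mk₀_comp_mk₀_assoc, T.d0_eq]
      exact hz
    · rintro ⟨z, rfl⟩
      dsimp only
      rw [extClass_comp_eq, Ext.mk₀_comp_mk₀_assoc, T.d0_eq]
      have key : ∀ j c (h : j + 1 + k * (m + 1) = c), (T.chainClass (j + 1)).comp
          ((Ext.mk₀ (T.ι 0)).comp z (zero_add _)) h = 0 := by
        intro j
        induction j with
        | zero =>
          intro c h
          subst h
          rw [chain_one_comp]
          exact (T.shortExact 0).extClass_comp_assoc z (h := rfl)
        | succ j ih =>
          intro c h
          rw [chain_succ_comp, ih, Ext.comp_zero]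
      rw [key, Ext.comp_zero]
  · intro k x
    constructor
    · intro hx
      dsimp only at hx
      obtain ⟨x', rfl⟩ := eqHom_comp_surj T.hKm.symm x
      rw [Ext.mk₀_comp_mk₀_assoc, T.dlast_eq] at hx
      simp only [Category.assoc, eqToHom_trans, eqToHom_refl, Category.comp_id] at hx
      have hk : (k + 1) * (m + 1) = k * (m + 1) + (m + 1) := by ring
      obtain ⟨y, hy⟩ := Ext.contravariant_sequence_exact₃ (T.shortExact m) Y x' hx
        (n₀ := m + k * (m + 1)) (by omega)
      obtain ⟨e, he⟩ := chain_surj_s2 T hv k m _ (by omega) rfl y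
      obtain ⟨e', rfl⟩ := eqHom_comp_surj T.hK0 e
      refine ⟨e', ?_⟩
      dsimp only
      rw [extClass_comp_eq, chain_succ_comp, he, hy]
    · rintro ⟨z, rfl⟩
      dsimp only
      rw [extClass_comp_eq, chain_succ_comp, Ext.mk₀_comp_mk₀_assoc, T.dlast_eq]
      simp only [Category.assoc, eqToHom_trans, eqToHom_refl, Category.comp_id]
      exact (T.shortExact m).comp_extClass_assoc _ _

end NZPaper
end

section
/- Let 𝓔 be an abelian category, n ≥ 1, M an n-cluster tilting subcategory of 𝓔, and Y : 0 → Y⁰ → Y¹ → ⋯ → Yⁿ → Y^{n+1} → 0 an n-exact sequence in M. For j ∈ {1,…,n−1} set C^j := Im(Y^j → Y^{j+1}) in 𝓔. Then for every X ∈ M and every k ∈ {1,…,n−1} with k ≠ n−j, one has Ext^k(X, C^j) = 0; equivalently, if Ext^k(X, C^j) ≠ 0 for some X ∈ M and k ∈ {1,…,n−1}, then k = n−j. -/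
open CategoryTheory CategoryTheory.Abelian CategoryTheory.Limits

universe w v u

namespace NZPaper

/-- Let `𝓔` be an abelian category, `n ≥ 1`, `M` an `n`-cluster tilting
subcategory of `𝓔`, and `Y` an `n`-exact sequence in `M`.  For `j ∈ {1,…,n-1}` let
`C^j = Im(Y^j → Y^{j+1})` (realized as the splice object `T.K j`).  Then for every `X ∈ M` and
every `k ∈ {1,…,n-1}` with `k ≠ n - j` one has `Ext^k(X, C^j) = 0`. -/
theorem ext_image_vanishes_low_degrees
    {C : Type u} [Category.{v} C] [Abelian C] [HasExt.{w} C]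
    (n : ℕ) (hn : 1 ≤ n) (M : Set C) (hM : IsNClusterTilting n M)
    (T : ExactExtension C n) (hT : ∀ i ≤ n + 1, T.Y i ∈ M)
    (j : ℕ) (hj1 : 1 ≤ j) (hj2 : j ≤ n - 1)
    (X : C) (hX : X ∈ M)
    (k : ℕ) (hk1 : 1 ≤ k) (hk2 : k ≤ n - 1) (hkj : k + j ≠ n) :
    ∀ e : Ext X (T.K j) k, e = 0 := by
  have hv : ∀ i ≤ n + 1, ∀ k, 1 ≤ k → k < n → ∀ e : Ext X (T.Y i) k, e = 0 :=
    fun i hi k h1 h2 e => (hM.2.2.2.2 (T.Y i)).1 (hT i hi) X hX k h1 h2 e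
  have low : ∀ j k : ℕ, 1 ≤ k → k + j < n → ∀ e : Ext X (T.K j) k, e = 0 := by
    intro j
    induction j with
    | zero =>
      intro k h1 h2
      rw [T.hK0]
      exact hv 0 (by omega) k h1 (by omega)
    | succ j ih =>
      intro k h1 h2 e
      obtain ⟨x, hx⟩ := Ext.covariant_sequence_exact₃ X (T.shortExact j) e rfl
        (ih (k + 1) (by omega) (by omega) _)
      rw [← hx, hv (j + 1) (by omega) k h1 (by omega) x, Ext.zero_comp]
  have high : ∀ m j k : ℕ, j + m = n → m < k → k < n → ∀ e : Ext X (T.K j) k, e = 0 := by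
    intro m
    induction m with
    | zero =>
      intro j k h h1 h2
      obtain rfl : j = n := by omega
      rw [T.hKm]
      exact hv _ le_rfl k h1 h2
    | succ m ih =>
      intro j k h h1 h2 e
      obtain ⟨k, rfl⟩ : ∃ l, k = l + 1 := ⟨k - 1, by omega⟩
      obtain ⟨x, hx⟩ := Ext.covariant_sequence_exact₁ X (T.shortExact j) e
        (hv (j + 1) (by omega) (k + 1) (by omega) h2 _) rfl
      rw [← hx, ih (j + 1) k (by omega) (by omega) (by omega) x, Ext.zero_comp]
  rcases Nat.lt_or_ge (k + j) n with h | h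
  · exact low j k hk1 h
  · exact high (n - j) j k (by omega) (by omega) (by omega)


end NZPaper
end

section
/- Let 𝓔 be an abelian category, n ≥ 1, M an n-cluster tilting subcategory of 𝓔 such that additionally Ext^i(X,Y) = 0 for all X, Y ∈ M and all i ∈ {n+1,…,2n−1}, and let Y : 0 → Y⁰ → Y¹ → ⋯ → Yⁿ → Y^{n+1} → 0 be an n-exact sequence in M. For j ∈ {1,…,n−1} set C^j := Im(Y^j → Y^{j+1}) in 𝓔. Then for every X ∈ M and every k ∈ {n+1,…,2n−1} with k ≠ 2n−j, one has Ext^k(X, C^j) = 0; equivalently, if Ext^k(X, C^j) ≠ 0 for some X ∈ M and k ∈ {n+1,…,2n−1}, then k = 2n−j. -/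
open CategoryTheory CategoryTheory.Abelian CategoryTheory.Limits

universe w v u

namespace NZPaper

theorem ext_low_aux {C : Type u} [Category.{v} C] [Abelian C] [HasExt.{w} C]
    (n : ℕ) (M : Set C)
    (hvan : ∀ X ∈ M, ∀ Y ∈ M, ∀ i : ℕ, n + 1 ≤ i → i ≤ 2 * n - 1 → ∀ e : Ext X Y i, e = 0)
    (T : ExactExtension C n) (hT : ∀ i ≤ n + 1, T.Y i ∈ M) (X : C) (hX : X ∈ M) (j : ℕ) :
    ∀ k : ℕ, j ≤ n → n + 1 ≤ k → k + j ≤ 2 * n - 1 → ∀ e : Ext X (T.K j) k, e = 0 := by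
  induction j with
  | zero =>
    intro k _ h1 h2 e
    exact hvan X hX (T.K 0) (T.hK0 ▸ hT 0 (by omega)) k h1 (by omega) e
  | succ j ih =>
    intro k hj h1 h2 e
    obtain ⟨x, hx⟩ := Ext.covariant_sequence_exact₃ X (T.shortExact j) e rfl
      (ih (k + 1) (by omega) (by omega) (by omega) _)
    have h0 : x = 0 := hvan X hX _ (hT (j + 1) (by omega)) k h1 (by omega) x
    rw [← hx, h0, Ext.zero_comp]

theorem ext_high_aux {C : Type u} [Category.{v} C] [Abelian C] [HasExt.{w} C]
    (n : ℕ) (M : Set C)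
    (hvan : ∀ X ∈ M, ∀ Y ∈ M, ∀ i : ℕ, n + 1 ≤ i → i ≤ 2 * n - 1 → ∀ e : Ext X Y i, e = 0)
    (T : ExactExtension C n) (hT : ∀ i ≤ n + 1, T.Y i ∈ M) (X : C) (hX : X ∈ M) (m : ℕ) :
    ∀ j k : ℕ, j + m = n → k ≤ 2 * n - 1 → 2 * n < k + j → ∀ e : Ext X (T.K j) k, e = 0 := by
  induction m with
  | zero =>
    intro j k hj h1 h2 e
    obtain rfl : j = n := by omega
    exact hvan X hX (T.K j) (T.hKm ▸ hT (j + 1) (by omega)) k (by omega) h1 e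
  | succ m ih =>
    intro j k hj h1 h2 e
    obtain ⟨k, rfl⟩ : ∃ k', k = k' + 1 := ⟨k - 1, by omega⟩
    obtain ⟨x, hx⟩ := Ext.covariant_sequence_exact₁ X (T.shortExact j) e
      (hvan X hX _ (hT (j + 1) (by omega)) (k + 1) (by omega) (by omega) _) rfl
    have h0 : x = 0 := ih (j + 1) k (by omega) (by omega) (by omega) x
    rw [← hx, h0, Ext.zero_comp]

/-- Let `𝓔` be an abelian category, `n ≥ 1`, `M` an `n`-cluster tilting
subcategory of `𝓔` such that moreover `Ext^i(X,Y) = 0` for all `X, Y ∈ M` and all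
`i ∈ {n+1,…,2n-1}`, and let `Y` be an `n`-exact sequence in `M`.  For `j ∈ {1,…,n-1}` let
`C^j = Im(Y^j → Y^{j+1})` (realized as the splice object `T.K j`).  Then for every `X ∈ M` and
every `k ∈ {n+1,…,2n-1}` with `k ≠ 2n - j` one has `Ext^k(X, C^j) = 0`. -/
theorem ext_image_vanishes_mid_degrees
    {C : Type u} [Category.{v} C] [Abelian C] [HasExt.{w} C]
    (n : ℕ) (hn : 1 ≤ n) (M : Set C) (hM : IsNClusterTilting n M)
    (hvan : ∀ X ∈ M, ∀ Y ∈ M, ∀ i : ℕ, n + 1 ≤ i → i ≤ 2 * n - 1 → ∀ e : Ext X Y i, e = 0)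
    (T : ExactExtension C n) (hT : ∀ i ≤ n + 1, T.Y i ∈ M)
    (j : ℕ) (hj1 : 1 ≤ j) (hj2 : j ≤ n - 1)
    (X : C) (hX : X ∈ M)
    (k : ℕ) (hk1 : n + 1 ≤ k) (hk2 : k ≤ 2 * n - 1) (hkj : k + j ≠ 2 * n) :
    ∀ e : Ext X (T.K j) k, e = 0 := by
  intro e
  rcases Nat.lt_or_gt_of_ne hkj with h | h
  · exact ext_low_aux n M hvan T hT X hX j k (by omega) hk1 (by omega) e
  · exact ext_high_aux n M hvan T hT X hX (n - j) j k (by omega) hk2 h e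

end NZPaper
end

section
/- Let 𝓔 be an abelian category, n ≥ 1, M an nℤ-cluster tilting subcategory of 𝓔, and Y : 0 → Y⁰ → Y¹ → ⋯ → Yⁿ → Y^{n+1} → 0 an n-exact sequence in M. For j ∈ {1,…,n−1} set C^j := Im(Y^j → Y^{j+1}) in 𝓔. If Ext^k(X, C^j) ≠ 0 for some X ∈ M and some k ≥ 1, then n divides k or n divides k+j (i.e., k ∈ nℤ or k ∈ nℤ − j). -/
open CategoryTheory CategoryTheory.Abelian CategoryTheory.Limits

universe w v u

namespace NZPaper

theorem auxDown {C : Type u} [Category.{v} C] [Abelian C] [HasExt.{w} C]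
    (n : ℕ) (M : Set C) (hM : IsNZClusterTilting n M)
    (T : ExactExtension C n) (hT : ∀ i ≤ n + 1, T.Y i ∈ M) (X : C) (hX : X ∈ M) :
    ∀ j k : ℕ, j ≤ n → 1 ≤ k → (∀ i ≤ j, ¬ (n ∣ (k + i))) → ∀ e : Ext X (T.K j) k, e = 0 := by
  intro j
  induction j with
  | zero =>
    intro k _ hk h
    rw [T.hK0]
    exact hM.2 X hX _ (hT 0 (by omega)) k hk (h 0 le_rfl)
  | succ j ih =>
    intro k hj hk h e
    obtain ⟨x, hx⟩ := Ext.covariant_sequence_exact₃ X (T.shortExact j) e rfl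
      (ih (k + 1) (by omega) (by omega) (fun i hi => by
        have := h (i + 1) (by omega)
        rwa [show k + 1 + i = k + (i + 1) by omega]) _)
    have hx0 : x = 0 := hM.2 X hX _ (hT (j + 1) (by omega)) k hk (h 0 (by omega)) x
    rw [← hx, hx0, Ext.zero_comp]

theorem auxUp {C : Type u} [Category.{v} C] [Abelian C] [HasExt.{w} C]
    (n : ℕ) (M : Set C) (hM : IsNZClusterTilting n M)
    (T : ExactExtension C n) (hT : ∀ i ≤ n + 1, T.Y i ∈ M) (X : C) (hX : X ∈ M) :
    ∀ m j k : ℕ, j + m = n → 1 ≤ k → (∀ i ≤ m, ¬ (n ∣ (k + i))) →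
      ∀ e : Ext X (T.K j) (k + m), e = 0 := by
  intro m
  induction m with
  | zero =>
    intro j k hj hk h
    obtain rfl : j = n := by omega
    rw [T.hKm]
    exact hM.2 X hX _ (hT _ le_rfl) (k + 0) hk (h 0 le_rfl)
  | succ m ih =>
    intro j k hj hk h e
    obtain ⟨x, hx⟩ := Ext.covariant_sequence_exact₁ X (T.shortExact j) e
      (hM.2 X hX _ (hT (j + 1) (by omega)) (k + (m + 1)) (by omega) (h _ le_rfl) _)
      (n₀ := k + m) rfl
    have hx0 : x = 0 := ih (j + 1) k (by omega) hk (fun i hi => h i (by omega)) x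
    rw [← hx, hx0, Ext.zero_comp]

/-- Let `𝓔` be an abelian category, `n ≥ 1`, `M` an `nℤ`-cluster tilting
subcategory of `𝓔`, and `Y` an `n`-exact sequence in `M`.  For `j ∈ {1,…,n-1}` let
`C^j = Im(Y^j → Y^{j+1})` (realized as the splice object `T.K j`).  If `Ext^k(X, C^j) ≠ 0` for
some `X ∈ M` and some `k ≥ 1`, then `n ∣ k` or `n ∣ (k + j)`; equivalently, if `n ∤ k` and
`n ∤ (k + j)` then `Ext^k(X, C^j) = 0`. -/
theorem ext_image_vanishes_nZ
    {C : Type u} [Category.{v} C] [Abelian C] [HasExt.{w} C]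
    (n : ℕ) (hn : 1 ≤ n) (M : Set C) (hM : IsNZClusterTilting n M)
    (T : ExactExtension C n) (hT : ∀ i ≤ n + 1, T.Y i ∈ M)
    (j : ℕ) (hj1 : 1 ≤ j) (hj2 : j ≤ n - 1)
    (X : C) (hX : X ∈ M)
    (k : ℕ) (hk1 : 1 ≤ k) (hk : ¬ (n ∣ k)) (hkj : ¬ (n ∣ (k + j))) :
    ∀ e : Ext X (T.K j) k, e = 0 := by
  have hdm := Nat.div_add_mod k n
  have hr := Nat.mod_lt k (show 0 < n by omega)
  have hr0 : k % n ≠ 0 := fun h => hk (Nat.dvd_of_mod_eq_zero h)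
  have key : ∀ s, 0 < s → s < n → ¬ n ∣ n * (k / n) + s := by
    intro s h0 h1 h2
    have := (Nat.dvd_add_right (Nat.dvd_mul_right n (k / n))).1 h2
    exact absurd (Nat.le_of_dvd h0 this) (by omega)
  have hne : k % n + j ≠ n := by
    intro h
    apply hkj
    rw [← hdm, Nat.add_assoc, h]
    exact Nat.dvd_add (Nat.dvd_mul_right _ _) dvd_rfl
  rcases lt_or_gt_of_ne hne with h | h
  · refine auxDown n M hM T hT X hX j k (by omega) hk1 (fun i hi => ?_)
    have := key (k % n + i) (by omega) (by omega)
    rwa [← Nat.add_assoc, hdm] at this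
  · obtain ⟨k', hk'⟩ : ∃ k', k = k' + (n - j) := ⟨k - (n - j), by omega⟩
    have := auxUp n M hM T hT X hX (n - j) j k' (by omega) (by omega) (fun i hi => by
      have := key (k % n + i - (n - j)) (by omega) (by omega)
      rwa [show n * (k / n) + (k % n + i - (n - j)) = k' + i by omega] at this)
    rwa [← hk'] at this

end NZPaper
end
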